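/- Let A and B be nonempty closed convex subsets of E and let x̄ ∈ A ∩ B. Suppose there exist c ∈ [0,1) and ρ > 0 such that for every x₀ ∈ A ∩ B_ρ(x̄) the alternating projections sequence x_{k+1} = P_A(P_B x_k) converges R-linearly with rate c to some point of A ∩ B (i.e. there exist x̃ ∈ A ∩ B and γ > 0 with ‖x_k − x̃‖ ≤ γ·c^k for all k ∈ ℕ). Then dist(x, A ∩ B) ≤ (1/(1−c))·dist(x, B) for all x ∈ A ∩ B_ρ(x̄); in particular {A,B} is subtransversal at x̄ with constant at most 1/(1−c). -/

import Mathlib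

/-!
Let `b k = P_B (a k)` and `a (k + 1) = P_A (b k)`. By the obtuse-angle characterization of the
projection, the gaps `‖a k - b k‖` form a log-convex sequence, so their successive ratios are
nondecreasing. R-linear convergence with rate `c` to a point of `A ∩ B` bounds the gaps by a
multiple of `c ^ k`, which for a log-convex sequence forces every ratio to be at most `c`. Hence the
gaps, and with them the steps `‖a k - a (k + 1)‖`, are at most `c ^ k * ‖a 0 - b 0‖`; summing the
steps bounds the distance from `a 0` to the limit by `‖a 0 - b 0‖ / (1 - c)`.
-/

open Filter Metric Topology

theorem le_of_forall_pow_mul_le_mul_pow {r s m C : ℝ} (hs : 0 ≤ s) (hm : 0 < m)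
    (h : ∀ k : ℕ, r ^ k * m ≤ C * s ^ k) : r ≤ s := by
  by_contra! hsr
  have hr : 0 < r := hs.trans_lt hsr
  have hlim : Tendsto (fun k : ℕ => C * (s / r) ^ k) atTop (𝓝 (C * 0)) :=
    (tendsto_pow_atTop_nhds_zero_of_lt_one (by positivity) ((div_lt_one hr).2 hsr)).const_mul C
  have hm_le : m ≤ C * 0 := by
    refine ge_of_tendsto' hlim fun k => ?_
    rw [div_pow, ← mul_div_assoc, le_div_iff₀ (by positivity), mul_comm]
    exact h k
  linarith

theorem tendsto_of_norm_sub_le_geometric {E : Type*} [SeminormedAddCommGroup E] {x : ℕ → E}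
    {z : E} {c C : ℝ} (hc0 : 0 ≤ c) (hc1 : c < 1) (hx : ∀ k, ‖x k - z‖ ≤ C * c ^ k) :
    Tendsto x atTop (𝓝 z) := by
  have hgeom : Tendsto (fun k : ℕ => C * c ^ k) atTop (𝓝 0) := by
    simpa only [mul_zero] using (tendsto_pow_atTop_nhds_zero_of_lt_one hc0 hc1).const_mul C
  exact tendsto_iff_norm_sub_tendsto_zero.2
    (squeeze_zero (fun _ => norm_nonneg _) hx hgeom)

/-- A log-convex sequence of nonnegative reals, written without the ratios
`u (k + 1) / u k`, whose monotonicity it expresses, so that zero terms are harmless. -/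
structure LogConvexSeq (u : ℕ → ℝ) : Prop where
  nonneg : ∀ k, 0 ≤ u k
  sq_le_mul : ∀ k, u (k + 1) ^ 2 ≤ u k * u (k + 2)

namespace LogConvexSeq

variable {u : ℕ → ℝ} {c C : ℝ}

theorem shift (hu : LogConvexSeq u) (n : ℕ) : LogConvexSeq fun k => u (n + k) :=
  ⟨fun k => hu.nonneg (n + k), fun k => hu.sq_le_mul (n + k)⟩

theorem one_mul_le_zero_mul_succ (hu : LogConvexSeq u) (k : ℕ) :
    u 1 * u k ≤ u 0 * u (k + 1) := by
  induction k with
  | zero => exact (mul_comm _ _).le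
  | succ k ih =>
    rcases (hu.nonneg (k + 1)).eq_or_lt with hzero | hpos
    · rw [← hzero, mul_zero]
      exact mul_nonneg (hu.nonneg 0) (hu.nonneg (k + 2))
    · refine le_of_mul_le_mul_right ?_ hpos
      calc u 1 * u (k + 1) * u (k + 1) = u 1 * u (k + 1) ^ 2 := by ring
        _ ≤ u 1 * (u k * u (k + 2)) :=
          mul_le_mul_of_nonneg_left (hu.sq_le_mul k) (hu.nonneg 1)
        _ = u 1 * u k * u (k + 2) := by ring
        _ ≤ u 0 * u (k + 1) * u (k + 2) := mul_le_mul_of_nonneg_right ih (hu.nonneg (k + 2))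
        _ = u 0 * u (k + 2) * u (k + 1) := by ring

theorem one_pow_mul_zero_le (hu : LogConvexSeq u) (k : ℕ) :
    u 1 ^ k * u 0 ≤ u 0 ^ k * u k := by
  induction k with
  | zero => simp
  | succ k ih =>
    calc u 1 ^ (k + 1) * u 0 = u 1 * (u 1 ^ k * u 0) := by ring
      _ ≤ u 1 * (u 0 ^ k * u k) := mul_le_mul_of_nonneg_left ih (hu.nonneg 1)
      _ = u 0 ^ k * (u 1 * u k) := by ring
      _ ≤ u 0 ^ k * (u 0 * u (k + 1)) :=
        mul_le_mul_of_nonneg_left (hu.one_mul_le_zero_mul_succ k) (pow_nonneg (hu.nonneg 0) k)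
      _ = u 0 ^ (k + 1) * u (k + 1) := by ring

theorem one_le_mul_zero_of_le_geometric (hu : LogConvexSeq u) (hc : 0 ≤ c)
    (hle : ∀ k, u k ≤ C * c ^ k) : u 1 ≤ c * u 0 := by
  rcases (hu.nonneg 0).eq_or_lt with hzero | hpos
  · have hsq : u 1 ^ 2 ≤ 0 := by simpa [← hzero] using hu.sq_le_mul 0
    have hone : u 1 = 0 := (pow_eq_zero_iff two_ne_zero).1 (hsq.antisymm (sq_nonneg _))
    rw [← hzero, mul_zero, hone]
  · refine le_of_forall_pow_mul_le_mul_pow (C := C) (mul_nonneg hc hpos.le) hpos fun k => ?_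
    calc u 1 ^ k * u 0 ≤ u 0 ^ k * u k := hu.one_pow_mul_zero_le k
      _ ≤ u 0 ^ k * (C * c ^ k) := mul_le_mul_of_nonneg_left (hle k) (pow_nonneg hpos.le k)
      _ = C * (c * u 0) ^ k := by ring

theorem succ_le_mul_of_le_geometric (hu : LogConvexSeq u) (hc : 0 ≤ c)
    (hle : ∀ k, u k ≤ C * c ^ k) (n : ℕ) : u (n + 1) ≤ c * u n :=
  (hu.shift n).one_le_mul_zero_of_le_geometric hc (C := C * c ^ n) fun k =>
    (hle (n + k)).trans_eq (by ring)

theorem le_zero_mul_pow_of_le_geometric (hu : LogConvexSeq u) (hc : 0 ≤ c)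
    (hle : ∀ k, u k ≤ C * c ^ k) (n : ℕ) : u n ≤ u 0 * c ^ n := by
  rw [mul_comm]
  exact le_geom hc n fun k _ => hu.succ_le_mul_of_le_geometric hc hle k

end LogConvexSeq

theorem sq_le_mul_of_interlaced {u₀ u₁ u₂ v₀ v₁ : ℝ} (hu₀ : 0 ≤ u₀) (hu₁ : 0 ≤ u₁)
    (hu₂ : 0 ≤ u₂) (hv₀ : v₀ ^ 2 ≤ u₀ * u₁) (hu : u₁ ^ 2 ≤ v₀ * v₁)
    (hv₁ : v₁ ^ 2 ≤ u₁ * u₂) : u₁ ^ 2 ≤ u₀ * u₂ := by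
  rcases hu₁.eq_or_lt with rfl | hpos
  · simpa using mul_nonneg hu₀ hu₂
  · refine le_of_mul_le_mul_left ?_ (pow_pos hpos 2)
    calc u₁ ^ 2 * u₁ ^ 2 = (u₁ ^ 2) ^ 2 := by ring
      _ ≤ (v₀ * v₁) ^ 2 := by gcongr
      _ = v₀ ^ 2 * v₁ ^ 2 := by ring
      _ ≤ u₀ * u₁ * (u₁ * u₂) := by gcongr
      _ = u₁ ^ 2 * (u₀ * u₂) := by ring

/-- `p` is a point of `S` nearest to `y`. Stated as a relation, so that it needs neither existence
nor uniqueness of nearest points. -/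
def IsNearestPoint {E : Type*} [SeminormedAddCommGroup E] (S : Set E) (y p : E) : Prop :=
  p ∈ S ∧ ‖y - p‖ = infDist y S

/-- The two interlaced halves of an alternating projections sequence started in `A`: `b k` is the
projection of `a k` onto `B`, and `a (k + 1)` is the projection of `b k` onto `A`. -/
structure IsAlternatingProjections {E : Type*} [SeminormedAddCommGroup E] (A B : Set E)
    (a b : ℕ → E) : Prop where
  zero_mem : a 0 ∈ A
  isNearestPoint_right : ∀ k, IsNearestPoint B (a k) (b k)
  isNearestPoint_left : ∀ k, IsNearestPoint A (b k) (a (k + 1))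

namespace IsAlternatingProjections

variable {E : Type*} [SeminormedAddCommGroup E] {A B : Set E}

theorem mem_left {a b : ℕ → E} (h : IsAlternatingProjections A B a b) : ∀ k, a k ∈ A
  | 0 => h.zero_mem
  | k + 1 => (h.isNearestPoint_left k).1

theorem of_iterate {PA PB : E → E} (hPA : ∀ y, IsNearestPoint A y (PA y))
    (hPB : ∀ y, IsNearestPoint B y (PB y)) {x : E} (hx : x ∈ A) :
    IsAlternatingProjections A B (fun k => (PA ∘ PB)^[k] x) (fun k => PB ((PA ∘ PB)^[k] x)) where
  zero_mem := hx
  isNearestPoint_right _ := hPB _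
  isNearestPoint_left k := by
    rw [Function.iterate_succ_apply']
    exact hPA _

end IsAlternatingProjections

section InnerProductSpace

variable {E : Type*} [NormedAddCommGroup E] [InnerProductSpace ℝ E]

namespace IsNearestPoint

variable {S T : Set E} {w x y p q : E}

theorem inner_sub_sub_nonpos (hS : Convex ℝ S) (hp : IsNearestPoint S y p) (hw : w ∈ S) :
    inner ℝ (y - p) (w - p) ≤ 0 := by
  refine (norm_eq_iInf_iff_real_inner_le_zero hS hp.1).1 ?_ w hw
  simpa only [infDist_eq_iInf, dist_eq_norm] using hp.2

theorem norm_sub_sq_le_mul (hS : Convex ℝ S) (hT : Convex ℝ T) (hp : IsNearestPoint S x p)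
    (hq : IsNearestPoint T p q) (hx : x ∈ T) (hw : w ∈ S) :
    ‖p - q‖ ^ 2 ≤ ‖x - p‖ * ‖q - w‖ := by
  have hdecomp : ‖p - q‖ ^ 2 =
      inner ℝ (p - q) (x - q) + inner ℝ (x - p) (w - p) + inner ℝ (x - p) (q - w) := by
    rw [add_assoc, ← inner_add_right, sub_add_sub_cancel', real_inner_comm (q - p),
      ← neg_sub p q, inner_neg_left, ← sub_eq_add_neg, ← inner_sub_right,
      sub_sub_sub_cancel_left, real_inner_self_eq_norm_sq]
  linarith [hp.inner_sub_sub_nonpos hS hw, hq.inner_sub_sub_nonpos hT hx,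
    real_inner_le_norm (x - p) (q - w)]

theorem norm_sub_le_of_mem (hS : Convex ℝ S) (hp : IsNearestPoint S y p) (hx : x ∈ S) :
    ‖x - p‖ ≤ ‖x - y‖ := by
  have hsq : ‖x - p‖ * ‖x - p‖ ≤ ‖x - y‖ * ‖x - p‖ := by
    calc ‖x - p‖ * ‖x - p‖ = inner ℝ (x - y) (x - p) + inner ℝ (y - p) (x - p) := by
          rw [← inner_add_left, sub_add_sub_cancel, real_inner_self_eq_norm_mul_norm]
      _ ≤ ‖x - y‖ * ‖x - p‖ + 0 :=
          add_le_add (real_inner_le_norm _ _) (hp.inner_sub_sub_nonpos hS hx)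
      _ = ‖x - y‖ * ‖x - p‖ := add_zero _
  rcases (norm_nonneg (x - p)).eq_or_lt with hzero | hpos
  · exact hzero.symm.trans_le (norm_nonneg _)
  · exact le_of_mul_le_mul_right hsq hpos

end IsNearestPoint

namespace IsAlternatingProjections

variable {A B : Set E} {a b : ℕ → E} {c C : ℝ} {z : E}

theorem logConvexSeq_norm_sub (hA : Convex ℝ A) (hB : Convex ℝ B)
    (h : IsAlternatingProjections A B a b) : LogConvexSeq fun k => ‖a k - b k‖ := by
  have hba (k : ℕ) : ‖b k - a (k + 1)‖ ^ 2 ≤ ‖a k - b k‖ * ‖a (k + 1) - b (k + 1)‖ :=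
    (h.isNearestPoint_right k).norm_sub_sq_le_mul hB hA (h.isNearestPoint_left k) (h.mem_left k)
      (h.isNearestPoint_right (k + 1)).1
  have hab (k : ℕ) :
      ‖a (k + 1) - b (k + 1)‖ ^ 2 ≤ ‖b k - a (k + 1)‖ * ‖b (k + 1) - a (k + 2)‖ :=
    (h.isNearestPoint_left k).norm_sub_sq_le_mul hA hB (h.isNearestPoint_right (k + 1))
      (h.isNearestPoint_right k).1 (h.mem_left (k + 2))
  exact ⟨fun k => norm_nonneg _, fun k => sq_le_mul_of_interlaced (norm_nonneg _) (norm_nonneg _)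
    (norm_nonneg _) (hba k) (hab k) (hba (k + 1))⟩

theorem norm_sub_le_geometric (hA : Convex ℝ A) (hB : Convex ℝ B)
    (h : IsAlternatingProjections A B a b) (hz : z ∈ B) (hc : 0 ≤ c)
    (hconv : ∀ k, ‖a k - z‖ ≤ C * c ^ k) (k : ℕ) : ‖a k - b k‖ ≤ ‖a 0 - b 0‖ * c ^ k := by
  refine (h.logConvexSeq_norm_sub hA hB).le_zero_mul_pow_of_le_geometric (C := C) hc
    (fun j => ?_) k
  calc ‖a j - b j‖ = infDist (a j) B := (h.isNearestPoint_right j).2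
    _ ≤ ‖a j - z‖ := (infDist_le_dist_of_mem hz).trans_eq (dist_eq_norm _ _)
    _ ≤ C * c ^ j := hconv j

theorem dist_succ_le_norm_sub (hA : Convex ℝ A) (h : IsAlternatingProjections A B a b) (k : ℕ) :
    dist (a k) (a (k + 1)) ≤ ‖a k - b k‖ :=
  (dist_eq_norm _ _).trans_le ((h.isNearestPoint_left k).norm_sub_le_of_mem hA (h.mem_left k))

end IsAlternatingProjections

theorem subtransversality_necessary_for_Rlinear_convergence_convex_general
    {A B : Set E} (hA : Convex ℝ A) (hB : Convex ℝ B) {a b : ℕ → E}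
    (h : IsAlternatingProjections A B a b) {z : E} (hz : z ∈ A ∩ B) {c C : ℝ}
    (hc0 : 0 ≤ c) (hc1 : c < 1) (hconv : ∀ k, ‖a k - z‖ ≤ C * c ^ k) :
    infDist (a 0) (A ∩ B) ≤ 1 / (1 - c) * infDist (a 0) B := by
  have hstep (k : ℕ) : dist (a k) (a (k + 1)) ≤ ‖a 0 - b 0‖ * c ^ k :=
    (h.dist_succ_le_norm_sub hA k).trans (h.norm_sub_le_geometric hA hB hz.2 hc0 hconv k)
  calc infDist (a 0) (A ∩ B) ≤ dist (a 0) z := infDist_le_dist_of_mem hz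
    _ ≤ ‖a 0 - b 0‖ / (1 - c) := dist_le_of_le_geometric_of_tendsto₀ c _ hc1 hstep
        (tendsto_of_norm_sub_le_geometric hc0 hc1 hconv)
    _ = 1 / (1 - c) * infDist (a 0) B := by
        rw [(h.isNearestPoint_right 0).2, one_div_mul_eq_div]

end InnerProductSpace

/-- If every alternating projections sequence between the nonempty closed
convex sets `A`, `B` starting in `A ∩ B_ρ(xbar)` converges R-linearly with rate `c` to a
point of `A ∩ B`, then `dist(x, A ∩ B) ≤ (1/(1−c))·dist(x, B)` for all
`x ∈ A ∩ B_ρ(xbar)`; in particular `{A,B}` is subtransversal at `xbar` with constant at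
most `1/(1−c)`. -/
theorem subtransversality_necessary_for_Rlinear_convergence_convex
    {E : Type*} [NormedAddCommGroup E] [InnerProductSpace ℝ E] [FiniteDimensional ℝ E]
    (A B : Set E) (hAne : A.Nonempty) (hAc : IsClosed A) (hAconv : Convex ℝ A)
    (hBne : B.Nonempty) (hBc : IsClosed B) (hBconv : Convex ℝ B)
    (PA PB : E → E)
    (hPA : ∀ y, PA y ∈ A ∧ ‖y - PA y‖ = Metric.infDist y A)
    (hPB : ∀ y, PB y ∈ B ∧ ‖y - PB y‖ = Metric.infDist y B)
    (xbar : E) (hxbar : xbar ∈ A ∩ B)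
    (c ρ : ℝ) (hc0 : 0 ≤ c) (hc1 : c < 1) (hρ : 0 < ρ)
    (hconv : ∀ x : ℕ → E, x 0 ∈ A ∩ Metric.ball xbar ρ →
      (∀ k, x (k + 1) = PA (PB (x k))) →
      ∃ xlim ∈ A ∩ B, ∃ γ > (0 : ℝ), ∀ k, ‖x k - xlim‖ ≤ γ * c ^ k) :
    ∀ x ∈ A ∩ Metric.ball xbar ρ,
      Metric.infDist x (A ∩ B) ≤ (1 / (1 - c)) * Metric.infDist x B := by
  intro x₀ hx₀
  obtain ⟨z, hz, γ, -, hγ⟩ := hconv (fun k => (PA ∘ PB)^[k] x₀) hx₀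
    fun k => Function.iterate_succ_apply' (PA ∘ PB) k x₀
  exact subtransversality_necessary_for_Rlinear_convergence_convex_general hAconv hBconv
    (.of_iterate hPA hPB hx₀.1) hz hc0 hc1 hγ
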